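/- Let (c,f) be one of the seven pairs (1/2,1/2), (1/2,1/3), (1/2,1/6), (1/3,1/3), (1/6,1/6), (1/5,2/5), (1/10,3/10), and let M(c,f) be the least common denominator of the rationals 1/2, c, 1−c, f, 1−f, 3/2−c, 1/2+c, 3/2−f, 1/2+f. Then for every odd prime power q with q ≡ 1 (mod M(c,f)) and every generator ω of the group of multiplicative characters of 𝔽_q^×, one has ₄ℙ₃(φ, φ, ω^{(q−1)f}, ω^{(q−1)(1−f)}; ε, ω^{(q−1)(1/2−c)}, ω^{(q−1)(1/2+c)}; 1; q) = ₄ℙ₃(φ, φ, ω^{(q−1)c}, ω^{(q−1)(1−c)}; ε, ω^{(q−1)(1/2−f)}, ω^{(q−1)(1/2+f)}; 1; q), where all exponents (q−1)f, (q−1)(1/2−c), etc. are integers since q ≡ 1 (mod M(c,f)). -/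

import Mathlib

/-- Auxiliary to `periodP`: peels off the *first* pair of the list. -/
noncomputable def periodPAux {F : Type*} [Field F] [Fintype F]
    (A₁ : MulChar F ℂ) : List (MulChar F ℂ × MulChar F ℂ) → F → ℂ
  | [], lam => A₁⁻¹ (1 - lam)
  | p :: rest, lam => ∑ x : F, p.1 x * (p.1⁻¹ * p.2) (1 - x) * periodPAux A₁ rest (lam * x)

/-- `periodP A₁ [(A₂,B₂),…,(Aₙ₊₁,Bₙ₊₁)] λ` is the finite-field period function
`ₙ₊₁ℙₙ(A₁,…,Aₙ₊₁; B₂,…,Bₙ₊₁; λ; q)`: it is defined inductively by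
`₁ℙ₀(A₁;λ) = A₁⁻¹(1-λ)` and
`ₙ₊₁ℙₙ(A₁,…,Aₙ₊₁;B₂,…,Bₙ₊₁;λ) = ∑ₓ Aₙ₊₁(x)·(Aₙ₊₁⁻¹Bₙ₊₁)(1-x)·ₙℙₙ₋₁(A₁,…,Aₙ;B₂,…,Bₙ;λx)`,
the sum being over `x ∈ 𝔽_q`.  (Multiplicative characters are extended by `A(0)=0`,
which is automatic for `MulChar`.) -/
noncomputable def periodP {F : Type*} [Field F] [Fintype F]
    (A₁ : MulChar F ℂ) (l : List (MulChar F ℂ × MulChar F ℂ)) (lam : F) : ℂ :=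
  periodPAux A₁ l.reverse lam

/-- The complex-valued quadratic character `φ` of a finite field. -/
noncomputable def quadChar (F : Type*) [Field F] [Fintype F] [DecidableEq F] : MulChar F ℂ :=
  (quadraticChar F).ringHomComp (Int.castRingHom ℂ)

/-- The least common denominator of a list of rational numbers. -/
def lcd (l : List ℚ) : ℕ := (l.map Rat.den).foldr Nat.lcm 1

/-!
Substituting `x ↦ x⁻¹` in every sum defining a period function with first parameter `A` turns its
value at `λ⁻¹` into a sign times `A(λ)` times its value at `λ`, with each pair `(Aᵢ, Bᵢ)` replaced
by `(A/Bᵢ, A/Aᵢ)`. At `λ = 1` and `A = φ`, writing `X = ω^{(q-1)c}` and `Y = ω^{(q-1)f}`, the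
replacement fixes `(φ, ε)`, sends `(Y, φX⁻¹)` to `(X, φY⁻¹)` and `(Y⁻¹, φX)` to `(X⁻¹, φY)`, and
the signs cancel. The exponents match these pairs because `ω^{(q-1)/2} = φ`, which by Euler's
criterion only requires `ω(-1) = -1`.
-/

section Inversion

lemma mulChar_one_sub_inv {K R : Type*} [Field K] [CommMonoidWithZero R] (χ : MulChar K R) {x : K}
    (hx : x ≠ 0) : χ (1 - x⁻¹) = χ (-1) * χ⁻¹ x * χ (1 - x) := by
  have hfactor : 1 - x⁻¹ = -1 * x⁻¹ * (1 - x) := by field_simp; ring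
  rw [MulChar.inv_apply', ← map_mul, ← map_mul, hfactor]

variable {F : Type*} [Field F]

/-- The weight `A₂(x) · (A₂⁻¹B₂)(1-x)` with which a parameter pair `p = (A₂, B₂)` enters the
inductive definition of the period function. -/
noncomputable def periodKernel (p : MulChar F ℂ × MulChar F ℂ) (x : F) : ℂ :=
  p.1 x * (p.1⁻¹ * p.2) (1 - x)

/-- The parameter pair `(A/B₂, A/A₂)` that replaces `p = (A₂, B₂)` in a period function with first
parameter `A` when its argument is inverted. -/
noncomputable def invParam (A : MulChar F ℂ) (p : MulChar F ℂ × MulChar F ℂ) :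
    MulChar F ℂ × MulChar F ℂ :=
  (A / p.2, A / p.1)

lemma periodKernel_zero (p : MulChar F ℂ × MulChar F ℂ) : periodKernel p 0 = 0 := by
  rw [periodKernel, MulChar.map_zero, zero_mul]

lemma periodKernel_inv_mul (A : MulChar F ℂ) (p : MulChar F ℂ × MulChar F ℂ) {x : F}
    (hx : x ≠ 0) :
    periodKernel p x⁻¹ * A x = (p.1⁻¹ * p.2) (-1) * periodKernel (invParam A p) x := by
  have hquot : (A / p.2)⁻¹ * (A / p.1) = p.1⁻¹ * p.2 := by
    rw [inv_div, div_mul_div_comm, mul_comm A, mul_div_mul_right_eq_div, div_eq_inv_mul]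
  have hchar : p.1⁻¹ x * (p.1⁻¹ * p.2)⁻¹ x * A x = (A / p.2) x := by
    rw [← MulChar.mul_apply, ← MulChar.mul_apply, mul_inv, inv_inv, inv_mul_cancel_left,
      inv_mul_eq_div]
  rw [periodKernel, periodKernel, invParam, hquot, ← hchar, mulChar_one_sub_inv _ hx,
    ← MulChar.inv_apply']
  ring

variable [Fintype F] (A : MulChar F ℂ)

lemma periodP_nil (lam : F) : periodP A [] lam = A⁻¹ (1 - lam) := by
  simp only [periodP, List.reverse_nil, periodPAux]

lemma periodP_concat (l : List (MulChar F ℂ × MulChar F ℂ)) (p : MulChar F ℂ × MulChar F ℂ)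
    (lam : F) :
    periodP A (l ++ [p]) lam = ∑ x : F, periodKernel p x * periodP A l (lam * x) := by
  simp only [periodP, List.reverse_append, List.reverse_singleton, List.singleton_append,
    periodPAux, periodKernel]

theorem periodP_inv (l : List (MulChar F ℂ × MulChar F ℂ)) {lam : F} (hlam : lam ≠ 0) :
    periodP A l lam⁻¹ =
      A (-lam) * (l.map fun p => p.1⁻¹ * p.2).prod (-1) *
        periodP A (l.map (invParam A)) lam := by
  induction l using List.reverseRecOn generalizing lam with
  | nil =>
    have hA : A⁻¹ (-1) = A (-1) := by rw [MulChar.inv_apply', inv_neg, inv_one]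
    have hone : (1 : MulChar F ℂ) (-1) = 1 := MulChar.one_apply isUnit_one.neg
    rw [List.map_nil, List.map_nil, List.prod_nil, periodP_nil, periodP_nil,
      mulChar_one_sub_inv _ hlam, inv_inv, hA, hone, ← map_mul, neg_one_mul, mul_one]
  | append_singleton l p ih =>
    simp only [List.map_append, List.map_singleton, List.prod_append, List.prod_singleton,
      periodP_concat, Finset.mul_sum]
    refine Fintype.sum_equiv (Equiv.inv F) _ _ fun y => ?_
    rcases eq_or_ne y 0 with rfl | hy
    · simp only [Equiv.inv_apply, inv_zero, periodKernel_zero, zero_mul, mul_zero]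
    obtain ⟨x, rfl⟩ : ∃ x, y = x⁻¹ := ⟨y⁻¹, (inv_inv y).symm⟩
    have hx : x ≠ 0 := fun h => hy (by rw [h, inv_zero])
    rw [Equiv.inv_apply, inv_inv, ← mul_inv, ih (mul_ne_zero hlam hx), ← neg_mul, map_mul,
      MulChar.mul_apply _ (p.1⁻¹ * p.2) (-1)]
    linear_combination A (-lam) * (l.map fun p => p.1⁻¹ * p.2).prod (-1) *
      periodP A (l.map (invParam A)) (lam * x) * periodKernel_inv_mul A p hx

theorem periodP_four_swap (X Y : MulChar F ℂ) :
    periodP A [(A, 1), (Y, A * X⁻¹), (Y⁻¹, A * X)] 1 =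
      periodP A [(A, 1), (X, A * Y⁻¹), (X⁻¹, A * Y)] 1 := by
  have hmap : [(A, 1), (Y, A * X⁻¹), (Y⁻¹, A * X)].map (invParam A) =
      [(A, 1), (X, A * Y⁻¹), (X⁻¹, A * Y)] := by
    simp [invParam, div_eq_mul_inv]
  have hprod : ([(A, 1), (Y, A * X⁻¹), (Y⁻¹, A * X)].map fun p => p.1⁻¹ * p.2).prod = A := by
    simp only [List.map_cons, List.map_nil, List.prod_cons, List.prod_nil]
    rw [mul_one, mul_one, inv_inv, mul_mul_mul_comm, inv_mul_cancel, one_mul,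
      mul_mul_mul_comm, inv_mul_cancel, mul_one, inv_mul_cancel_left]
  have hsign : A (-1) * A (-1) = 1 := by rw [← map_mul, neg_mul_neg, one_mul, map_one]
  have hinv := periodP_inv A [(A, 1), (Y, A * X⁻¹), (Y⁻¹, A * X)] one_ne_zero
  rwa [hmap, hprod, hsign, one_mul, inv_one] at hinv

end Inversion

section QuadraticCharacter

lemma ringChar_ne_two_of_mulChar_neg_one {R R' : Type*} [CommRing R] [CommRing R']
    [NeZero (2 : R')] {χ : MulChar R R'} (hχ : χ (-1) = -1) : ringChar R ≠ 2 := by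
  intro hchar
  have : CharP R 2 := ringChar.of_eq hchar
  rw [CharTwo.neg_eq, map_one] at hχ
  exact two_ne_zero (α := R') (by linear_combination hχ)

lemma eq_one_of_generator_apply_eq_one {M R : Type*} [CommGroupWithZero M] [Finite M] [CommRing R]
    [Nontrivial R] [HasEnoughRootsOfUnity R (Monoid.exponent Mˣ)] {ω : MulChar M R}
    (hω : ∀ χ : MulChar M R, ∃ k : ℤ, χ = ω ^ k) {a : Mˣ} (ha : ω a = 1) : a = 1 := by
  by_contra hne
  obtain ⟨χ, hχ⟩ := MulChar.exists_apply_ne_one_of_hasEnoughRootsOfUnity M R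
    (Units.val_eq_one.not.2 hne)
  obtain ⟨k, rfl⟩ := hω χ
  rw [← MulChar.coe_toUnitHom, Units.val_eq_one] at ha
  rw [MulChar.zpow_apply_coe, ← MulChar.coe_toUnitHom, map_zpow, ha, one_zpow] at hχ
  exact hχ Units.val_one

lemma generator_apply_neg_one {F R : Type*} [Field F] [Finite F] (hF : ringChar F ≠ 2)
    [CommRing R] [IsDomain R] [HasEnoughRootsOfUnity R (Monoid.exponent Fˣ)] {ω : MulChar F R}
    (hω : ∀ χ : MulChar F R, ∃ k : ℤ, χ = ω ^ k) : ω (-1) = -1 := by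
  have hsq : ω (-1) ^ 2 = 1 := by rw [← map_pow, neg_one_sq, map_one]
  refine (sq_eq_one_iff.1 hsq).resolve_left fun hone => ?_
  have hunit : (-1 : Fˣ) = 1 := eq_one_of_generator_apply_eq_one hω (by simpa using hone)
  exact Ring.neg_one_ne_one_of_char_ne_two hF (by simpa using congrArg Units.val hunit)

lemma pow_card_div_two_eq_quadChar {F : Type*} [Field F] [Fintype F] [DecidableEq F]
    {ω : MulChar F ℂ} (hω : ω (-1) = -1) :
    ω ^ (Fintype.card F / 2) = quadChar F := by
  have hodd := ringChar_ne_two_of_mulChar_neg_one hω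
  ext a
  rw [MulChar.pow_apply_coe, ← map_pow, ← quadraticChar_eq_pow_of_char_ne_two' hodd]
  rcases quadraticChar_dichotomy a.ne_zero with ha | ha <;>
    simp [quadChar, ha, hω]

end QuadraticCharacter

section Exponents

lemma den_dvd_lcd {l : List ℚ} {r : ℚ} (hr : r ∈ l) : r.den ∣ lcd l := by
  induction l with
  | nil => simp at hr
  | cons s l ih =>
    rcases List.mem_cons.1 hr with rfl | hr
    · exact Nat.dvd_lcm_left _ _
    · exact (ih hr).trans (Nat.dvd_lcm_right _ _)

lemma num_add_of_den_eq_one {r s : ℚ} (hr : r.den = 1) (hs : s.den = 1) :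
    (r + s).num = r.num + s.num := by
  rw [← Rat.num_intCast (r.num + s.num), Int.cast_add, (Rat.den_eq_one_iff r).1 hr,
    (Rat.den_eq_one_iff s).1 hs]

lemma den_natCast_sub_one_mul_eq_one {n : ℕ} {r : ℚ} (hr : n ≡ 1 [MOD r.den]) :
    (((n : ℚ) - 1) * r).den = 1 := by
  obtain ⟨k, hk⟩ := Nat.modEq_iff_dvd.1 hr.symm
  have hval : ((n : ℚ) - 1) * r = ((k * r.num : ℤ) : ℚ) := by
    have hn : (n : ℚ) - 1 = r.den * k := by exact_mod_cast hk
    rw [hn, mul_right_comm, Rat.den_mul_eq_num, mul_comm, Int.cast_mul]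
  rw [hval, Rat.den_intCast]

lemma card_modEq_one_half {F : Type*} [Field F] [Fintype F] (hF : ringChar F ≠ 2) :
    Fintype.card F ≡ 1 [MOD (1 / 2 : ℚ).den] := by
  rw [one_div, Rat.inv_ofNat_den]
  exact FiniteField.odd_card_of_char_ne_two hF

variable {F R : Type*} [Field F] [Fintype F] [CommMonoidWithZero R]

/-- The character `ω^{(q-1)r}`, where `q` is the order of `F`. It is meant for `r` with
`(q-1)r` an integer; otherwise the exponent is the numerator of `(q-1)r`. -/
noncomputable def fracPow (ω : MulChar F R) (r : ℚ) : MulChar F R :=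
  ω ^ (((Fintype.card F : ℚ) - 1) * r).num

variable {ω : MulChar F R} {r s : ℚ}

lemma fracPow_add (hr : Fintype.card F ≡ 1 [MOD r.den]) (hs : Fintype.card F ≡ 1 [MOD s.den]) :
    fracPow ω (r + s) = fracPow ω r * fracPow ω s := by
  rw [fracPow, mul_add, num_add_of_den_eq_one (den_natCast_sub_one_mul_eq_one hr)
    (den_natCast_sub_one_mul_eq_one hs), zpow_add, fracPow, fracPow]

lemma fracPow_neg (ω : MulChar F R) (r : ℚ) : fracPow ω (-r) = (fracPow ω r)⁻¹ := by
  rw [fracPow, mul_neg, Rat.num_neg_eq_neg_num, zpow_neg, fracPow]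

lemma fracPow_sub (hr : Fintype.card F ≡ 1 [MOD r.den]) (hs : Fintype.card F ≡ 1 [MOD s.den]) :
    fracPow ω (r - s) = fracPow ω r * (fracPow ω s)⁻¹ := by
  rw [sub_eq_add_neg, fracPow_add hr (by rwa [Rat.den_neg_eq_den]), fracPow_neg]

lemma fracPow_one (ω : MulChar F R) : fracPow ω 1 = 1 := by
  classical
  have hexp : ((Fintype.card F : ℚ) - 1) * 1 = ((Fintype.card Fˣ : ℕ) : ℚ) := by
    rw [mul_one, Fintype.card_units, Nat.cast_pred Fintype.card_pos]
  rw [fracPow, hexp, Rat.num_natCast, zpow_natCast, MulChar.pow_card_eq_one]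

lemma fracPow_half [DecidableEq F] {ω : MulChar F ℂ} (hω : ω (-1) = -1) :
    fracPow ω (1 / 2) = quadChar F := by
  have hexp : ((Fintype.card F : ℚ) - 1) * (1 / 2) = ((Fintype.card F / 2 : ℕ) : ℚ) := by
    have hodd := FiniteField.odd_card_of_char_ne_two (ringChar_ne_two_of_mulChar_neg_one hω)
    have hcard : 2 * ((Fintype.card F / 2 : ℕ) : ℚ) + 1 = Fintype.card F := by
      exact_mod_cast Nat.two_mul_div_two_add_one_of_odd (Nat.odd_iff.2 hodd)
    linear_combination -(1 / 2) * hcard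
  rw [fracPow, hexp, Rat.num_natCast, zpow_natCast, pow_card_div_two_eq_quadChar hω]

end Exponents

theorem statement7_general {F : Type*} [Field F] [Fintype F] [DecidableEq F] {ω : MulChar F ℂ}
    (hω : ω (-1) = -1) {c f : ℚ} (hc : Fintype.card F ≡ 1 [MOD c.den])
    (hf : Fintype.card F ≡ 1 [MOD f.den]) :
    periodP (quadChar F)
        [(quadChar F, 1), (fracPow ω f, fracPow ω (1 / 2 - c)),
          (fracPow ω (1 - f), fracPow ω (1 / 2 + c))] 1 =
      periodP (quadChar F)
        [(quadChar F, 1), (fracPow ω c, fracPow ω (1 / 2 - f)),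
          (fracPow ω (1 - c), fracPow ω (1 / 2 + f))] 1 := by
  have hhalf := card_modEq_one_half (ringChar_ne_two_of_mulChar_neg_one hω)
  have hone : Fintype.card F ≡ 1 [MOD (1 : ℚ).den] := Nat.modEq_one
  rw [fracPow_sub hhalf hc, fracPow_sub hhalf hf, fracPow_add hhalf hc, fracPow_add hhalf hf,
    fracPow_sub hone hc, fracPow_sub hone hf, fracPow_half hω, fracPow_one, one_mul, one_mul]
  exact periodP_four_swap (quadChar F) (fracPow ω c) (fracPow ω f)

/-- For each of the seven pairs `(c,f)`, the two values
`₄ℙ₃(φ, φ, ω^{(q−1)f}, ω^{(q−1)(1−f)}; ε, ω^{(q−1)(1/2−c)}, ω^{(q−1)(1/2+c)}; 1; q)`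
obtained by interchanging the roles of `c` and `f` agree.  Here `ω` is a generator of
the group of multiplicative characters of `𝔽_q^×`, `φ` is the quadratic character, and
the exponents `(q−1)f`, `(q−1)(1/2−c)`, … are integers (extracted via `Rat.num`) since
`q ≡ 1 (mod M(c,f))`. -/
theorem statement7 (c f : ℚ)
    (hcf : (c, f) = (1/2, 1/2) ∨ (c, f) = (1/2, 1/3) ∨ (c, f) = (1/2, 1/6) ∨
      (c, f) = (1/3, 1/3) ∨ (c, f) = (1/6, 1/6) ∨ (c, f) = (1/5, 2/5) ∨
      (c, f) = (1/10, 3/10))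
    {F : Type*} [Field F] [Fintype F] [DecidableEq F] (hodd : ringChar F ≠ 2)
    (hq : Fintype.card F ≡ 1
      [MOD lcd [1/2, c, 1 - c, f, 1 - f, 3/2 - c, 1/2 + c, 3/2 - f, 1/2 + f]])
    (ω : MulChar F ℂ) (hω : ∀ χ : MulChar F ℂ, ∃ k : ℤ, χ = ω ^ k) :
    periodP (quadChar F)
        [(quadChar F, 1),
          (ω ^ (((Fintype.card F : ℚ) - 1) * f).num,
            ω ^ (((Fintype.card F : ℚ) - 1) * (1/2 - c)).num),
          (ω ^ (((Fintype.card F : ℚ) - 1) * (1 - f)).num,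
            ω ^ (((Fintype.card F : ℚ) - 1) * (1/2 + c)).num)] 1
      = periodP (quadChar F)
        [(quadChar F, 1),
          (ω ^ (((Fintype.card F : ℚ) - 1) * c).num,
            ω ^ (((Fintype.card F : ℚ) - 1) * (1/2 - f)).num),
          (ω ^ (((Fintype.card F : ℚ) - 1) * (1 - c)).num,
            ω ^ (((Fintype.card F : ℚ) - 1) * (1/2 + f)).num)] 1 := by
  exact statement7_general (generator_apply_neg_one hodd hω)
    (hq.of_dvd (den_dvd_lcd (by simp))) (hq.of_dvd (den_dvd_lcd (by simp)))
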